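/- Let w_k := (1/π) ∫_{−1/2}^{1/2} cos(πx)/(x−k)² dx for integers k ≥ 1, and for integers k, n ≥ 1 let a_{k,n} := 1/(n+k+1/2) + 1/(n−k+1/2), with (Ax)_k := ∑_{n=1}^∞ a_{k,n} x_n. Then w = (w_k)_{k≥1} is square-summable, and every square-summable real sequence x with Ax = w satisfies ‖x‖ ≤ 0.088. -/

import Mathlib

/-!
Write `m = n + 1/2`, so that `a_{k,n} = 2m/(m² - k²)`. Completed by the row `k = 0` (with weight
`1/√2`) and the column `n = 0`, the matrix `A/π` is the discrete Hilbert transform from odd sequences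
on `ℤ + 1/2` to even sequences on `ℤ`, and its columns are orthonormal in `ℓ²` (`orthonormal_col`).
Orthogonality is `∑_{k≥1} 2m/(m² - k²) = -1/m` (`hasSum_aMat`: the cotangent series at a zero of the
cotangent) combined with partial fractions; the normalization is `∑_{j∈ℤ} 1/(j+1/2)² = π²`.

Hence, if `Ax = w`, the sequence `y = ∑ x_n col_{n+1}` has entries `w_k/π` for `k ≥ 1` and a single
unknown entry `y_0 = c/(√2 π)`; moreover `y` is orthogonal to `col_0`, which does not occur in the
sum. This gives (`isometry_aMat`)

  `π² ‖x‖² = ‖w‖² + c²/2`  and  `2c = ∑_{k≥1} w_k/(k² - 1/4)`.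

It remains to bound `w_k` from above. Averaging the integrand over `x ↦ -x` turns `1/(x-k)²` into
`k⁻² (1+t)/(1-t)²` with `t = x²/k² ≤ 1/4`; this is at most `k⁻² (1 + 3t + 7.6 t²)` (`kernel_le`),
which integrates against `cos(πx)` in closed form. The result is `w_1 ≤ 0.2393` and
`w_k ≤ 0.2109/k²` for `k ≥ 2`, and the sums over `k ≥ 2` are evaluated through `ζ(2)`, `ζ(4)` and the
cotangent series. The outcome `π² ‖x‖² ≤ 0.0753` lies below `0.088² π² ≈ 0.0764`.
-/

/-- The matrix entries `a_{k,n} = 1/(n+k+1/2) + 1/(n−k+1/2)`, for `k, n ≥ 1`. -/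
noncomputable def aMat (k n : ℕ) : ℝ :=
  1 / ((n : ℝ) + (k : ℝ) + 1 / 2) + 1 / ((n : ℝ) - (k : ℝ) + 1 / 2)

/-- The right-hand side sequence `w_k = (1/π)∫_{−1/2}^{1/2} cos(πx)/(x−k)² dx`, `k ≥ 1`. -/
noncomputable def wSeq (k : ℕ) : ℝ :=
  (1 / Real.pi) * ∫ x in (-(1 / 2) : ℝ)..(1 / 2), Real.cos (Real.pi * x) / (x - (k : ℝ)) ^ 2

/-! ### Sums over a column of the matrix -/

theorem half_sub_ne_zero (n k : ℕ) : (n : ℝ) - (k : ℝ) + 1 / 2 ≠ 0 := by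
  intro h
  have h2 : (2 * (n : ℤ) - 2 * (k : ℤ) + 1 : ℤ) = 0 := by
    have : (2 * (n : ℝ) - 2 * (k : ℝ) + 1 : ℝ) = 0 := by linarith
    exact_mod_cast this
  omega

theorem half_add_ne_zero (n k : ℕ) : (n : ℝ) + (k : ℝ) + 1 / 2 ≠ 0 := by positivity

theorem hasSum_of_eq {f g : ℕ → ℝ} {a b : ℝ} (h : HasSum f a) (hfg : ∀ k, g k = f k)
    (hab : b = a) : HasSum g b := by
  rw [hab, funext hfg]
  exact h

/-- The Mittag-Leffler expansion of `π cot(πz) - 1/z` at `z = n + 1/2`, where the cotangent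
vanishes. -/
theorem hasSum_aMat (n : ℕ) :
    HasSum (fun k : ℕ => aMat (k + 1) n) (-(1 / ((n : ℝ) + 1 / 2))) := by
  have hz : ((n : ℂ) + 1 / 2) ∈ Complex.integerComplement := by
    rw [Complex.mem_integerComplement_iff]
    rintro ⟨j, hj⟩
    have h2 : (2 * j : ℤ) = 2 * (n : ℤ) + 1 := by
      have : (2 * j : ℂ) = 2 * (n : ℂ) + 1 := by rw [hj]; ring
      exact_mod_cast this
    omega
  have hs := (summable_cotTerm hz).hasSum
  have hcot : Complex.cot (Real.pi * ((n : ℂ) + 1 / 2)) = 0 := by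
    rw [Complex.cot_eq_cos_div_sin]
    have : Complex.cos (Real.pi * ((n : ℂ) + 1 / 2)) = 0 := by
      rw [Complex.cos_eq_zero_iff]
      exact ⟨n, by push_cast; ring⟩
    rw [this, zero_div]
  have hv := cot_series_rep' hz
  rw [hcot] at hv
  unfold cotTerm at hs
  rw [← hv] at hs
  rw [← Complex.hasSum_ofReal]
  convert hs using 1
  · funext k
    unfold aMat
    push_cast
    rw [add_comm]
    congr 2 <;> ring
  · push_cast; ring

/-- The `ℤ`-indexed form of `∑ 1/(2k+1)² = π²/8`. -/
theorem hasSum_half_int : HasSum (fun j : ℤ => 1 / ((j : ℝ) + 1 / 2) ^ 2) (Real.pi ^ 2) := by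
  have h2 := hasSum_zeta_two
  have he : HasSum (fun k : ℕ => (1 : ℝ) / ((2 * k : ℕ) : ℝ) ^ 2) (1 / 4 * (Real.pi ^ 2 / 6)) := by
    refine hasSum_of_eq (h2.mul_left (1 / 4)) (fun k => ?_) rfl
    push_cast
    rw [mul_pow, one_div_mul_one_div]; norm_num
  have ho : Summable (fun k : ℕ => (1 : ℝ) / ((2 * k + 1 : ℕ) : ℝ) ^ 2) :=
    h2.summable.comp_injective (i := fun k : ℕ => 2 * k + 1) (fun a b h => by simpa using h)
  have ho' := ho.hasSum
  have := (HasSum.even_add_odd (f := fun k : ℕ => (1 : ℝ) / (k : ℝ) ^ 2) he ho').unique h2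
  have hv : HasSum (fun k : ℕ => 1 / ((k : ℝ) + 1 / 2) ^ 2) (Real.pi ^ 2 / 2) := by
    refine hasSum_of_eq (ho'.mul_left 4) (fun k => ?_) ?_
    · push_cast
      have : (k : ℝ) + 1 / 2 ≠ 0 := by positivity
      field_simp
      ring
    · linarith
  have := HasSum.of_nat_of_neg_add_one (f := fun j : ℤ => 1 / ((j : ℝ) + 1 / 2) ^ 2)
    (m := Real.pi ^ 2 / 2) (m' := Real.pi ^ 2 / 2) (by simpa using hv) (by
      refine hasSum_of_eq hv (fun k => ?_) rfl
      push_cast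
      congr 1
      ring)
  simpa using this

/-- The sum of squares of a column, from `a² = 1/(m-k)² + 1/(m+k)² + a/m` with `m = n + 1/2`. -/
theorem hasSum_aMat_sq (n : ℕ) :
    HasSum (fun k : ℕ => aMat (k + 1) n ^ 2) (Real.pi ^ 2 - 2 / ((n : ℝ) + 1 / 2) ^ 2) := by
  have h := (Equiv.addRight (n : ℤ)).hasSum_iff.mpr hasSum_half_int
  have h1 := (hasSum_nat_add_iff' 1).mpr h.nat_add_neg
  have hm : (n : ℝ) + 1 / 2 ≠ 0 := by positivity
  have h2 := h1.add ((hasSum_aMat n).mul_left (1 / ((n : ℝ) + 1 / 2)))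
  refine hasSum_of_eq h2 (fun k => ?_) ?_
  · have e1 := half_sub_ne_zero n (k + 1)
    have e2 := half_add_ne_zero n (k + 1)
    have e3 : 1 / ((n : ℝ) + 1 / 2) * aMat (k + 1) n =
        2 * (1 / ((n : ℝ) + ((k + 1 : ℕ) : ℝ) + 1 / 2)) *
          (1 / ((n : ℝ) - ((k + 1 : ℕ) : ℝ) + 1 / 2)) := by
      have e4 : 2 * ((n : ℝ) + 1 / 2) = ((n : ℝ) + ((k + 1 : ℕ) : ℝ) + 1 / 2) +
        ((n : ℝ) - ((k + 1 : ℕ) : ℝ) + 1 / 2) := by ring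
      unfold aMat
      generalize (n : ℝ) + ((k + 1 : ℕ) : ℝ) + 1 / 2 = p at *
      generalize (n : ℝ) - ((k + 1 : ℕ) : ℝ) + 1 / 2 = q at *
      generalize (n : ℝ) + 1 / 2 = m at *
      field_simp
      linear_combination -e4
    rw [e3]
    simp only [Function.comp, Equiv.coe_addRight]
    unfold aMat
    push_cast
    rw [show (-((k : ℝ) + 1) + n + 1 / 2) = n - (k + 1) + 1 / 2 by ring,
      show (((k : ℝ) + 1) + n + 1 / 2) = n + (k + 1) + 1 / 2 by ring]
    rw [← one_div_pow, ← one_div_pow]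
    ring
  · simp
    field_simp
    ring

/-- Inner products of distinct columns, by partial fractions: with `m = n + 1/2`, `m' = n' + 1/2`,
`1/((m²-k²)(m'²-k²)) = (1/(m²-k²) - 1/(m'²-k²))/(m'²-m²)`. -/
theorem hasSum_aMat_mul {n n' : ℕ} (h : n ≠ n') :
    HasSum (fun k : ℕ => aMat (k + 1) n * aMat (k + 1) n')
      (-(2 / (((n : ℝ) + 1 / 2) * ((n' : ℝ) + 1 / 2)))) := by
  have hm : (n : ℝ) + 1 / 2 ≠ 0 := by positivity
  have hm' : (n' : ℝ) + 1 / 2 ≠ 0 := by positivity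
  have hd : ((n' : ℝ) - n) ≠ 0 := sub_ne_zero.mpr (by exact_mod_cast h.symm)
  have hs : ((n' : ℝ) + n + 1) ≠ 0 := by positivity
  have h2 := (((hasSum_aMat n).mul_left (1 / (2 * ((n : ℝ) + 1 / 2)))).sub
    ((hasSum_aMat n').mul_left (1 / (2 * ((n' : ℝ) + 1 / 2))))).mul_left
    (4 * ((n : ℝ) + 1 / 2) * ((n' : ℝ) + 1 / 2) / ((n' - n) * (n' + n + 1)))
  have key : ∀ k j : ℕ, aMat (k + 1) j =
      2 * ((j : ℝ) + 1 / 2) * (1 / (((j : ℝ) + 1 / 2) ^ 2 - ((k : ℝ) + 1) ^ 2)) ∧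
      ((j : ℝ) + 1 / 2) ^ 2 - ((k : ℝ) + 1) ^ 2 ≠ 0 := by
    intro k j
    have e1 := half_sub_ne_zero j (k + 1)
    have e2 := half_add_ne_zero j (k + 1)
    have e3 : ((j : ℝ) + 1 / 2) ^ 2 - ((k : ℝ) + 1) ^ 2 =
      ((j : ℝ) + ((k + 1 : ℕ) : ℝ) + 1 / 2) * ((j : ℝ) - ((k + 1 : ℕ) : ℝ) + 1 / 2) := by
      push_cast; ring
    refine ⟨?_, e3 ▸ mul_ne_zero e2 e1⟩
    rw [e3, show 2 * ((j : ℝ) + 1 / 2) = ((j : ℝ) + ((k + 1 : ℕ) : ℝ) + 1 / 2) +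
        ((j : ℝ) - ((k + 1 : ℕ) : ℝ) + 1 / 2) by ring]
    unfold aMat
    generalize (j : ℝ) + ((k + 1 : ℕ) : ℝ) + 1 / 2 = p at *
    generalize (j : ℝ) - ((k + 1 : ℕ) : ℝ) + 1 / 2 = q at *
    field_simp
    ring
  refine hasSum_of_eq h2 (fun k => ?_) ?_
  · obtain ⟨a1, a2⟩ := key k n
    obtain ⟨b1, b2⟩ := key k n'
    rw [a1, b1]
    generalize hP : ((n : ℝ) + 1 / 2) ^ 2 - ((k : ℝ) + 1) ^ 2 = P at *
    generalize hQ : ((n' : ℝ) + 1 / 2) ^ 2 - ((k : ℝ) + 1) ^ 2 = Q at *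
    have hPQ : ((n' : ℝ) - n) * (n' + n + 1) = Q - P := by rw [← hP, ← hQ]; ring
    have hPQ0 : Q - P ≠ 0 := by rw [← hPQ]; exact mul_ne_zero hd hs
    rw [hPQ]
    generalize (n : ℝ) + 1 / 2 = m at *
    generalize (n' : ℝ) + 1 / 2 = m' at *
    field_simp
    norm_num
  · have hPQ : ((n' : ℝ) - n) * (n' + n + 1) = ((n' : ℝ) + 1 / 2) ^ 2 - ((n : ℝ) + 1 / 2) ^ 2 := by
      ring
    have hPQ0 := mul_ne_zero hd hs
    rw [hPQ] at hPQ0 ⊢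
    generalize (n : ℝ) + 1 / 2 = m at *
    generalize (n' : ℝ) + 1 / 2 = m' at *
    field_simp
    ring

/-! ### Orthonormality of the completed columns -/

/-- The `n`-th column `a_{·,n}/π` of the full system, completed by the suitably weighted entry
`a_{0,n}/(√2 π)` in row `0`. -/
noncomputable def colFun (n : ℕ) : ℕ → ℝ
  | 0 => Real.sqrt 2 / (((n : ℝ) + 1 / 2) * Real.pi)
  | k + 1 => aMat (k + 1) n / Real.pi

theorem hasSum_colFun_mul (n n' : ℕ) :
    HasSum (fun k => colFun n k * colFun n' k) (if n = n' then 1 else 0) := by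
  have hpi := Real.pi_ne_zero
  have hm : (n : ℝ) + 1 / 2 ≠ 0 := by positivity
  have hm' : (n' : ℝ) + 1 / 2 ≠ 0 := by positivity
  have h2 : Real.sqrt 2 ^ 2 = 2 := Real.sq_sqrt (by norm_num)
  rw [← hasSum_nat_add_iff' 1]
  by_cases h : n = n'
  · subst h
    refine hasSum_of_eq ((hasSum_aMat_sq n).mul_left (1 / Real.pi ^ 2)) (fun k => ?_) ?_
    · simp only [colFun]; field_simp
    · simp only [colFun, Finset.sum_range_one, if_true]
      generalize (n : ℝ) + 1 / 2 = m at *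
      field_simp
      rw [h2]
  · refine hasSum_of_eq ((hasSum_aMat_mul h).mul_left (1 / Real.pi ^ 2)) (fun k => ?_) ?_
    · simp only [colFun]; field_simp
    · simp only [colFun, Finset.sum_range_one, if_neg h]
      generalize (n : ℝ) + 1 / 2 = m at *
      generalize (n' : ℝ) + 1 / 2 = m' at *
      field_simp
      rw [h2]; ring

/-- `colFun n` as an element of `ℓ²`. -/
noncomputable def col (n : ℕ) : lp (fun _ : ℕ => ℝ) 2 :=
  ⟨colFun n, memℓp_gen (by
    have := (hasSum_colFun_mul n n).summable
    refine this.congr fun k => ?_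
    simp [sq])⟩

theorem col_apply (n k : ℕ) : (col n : ℕ → ℝ) k = colFun n k := rfl

theorem orthonormal_col : Orthonormal ℝ col := by
  rw [orthonormal_iff_ite]
  intro i j
  rw [lp.inner_eq_tsum, ← (hasSum_colFun_mul i j).tsum_eq]
  refine tsum_congr fun k => ?_
  simp [col_apply, mul_comm]

/-- The consequences of `∑ x_n col_{n+1}` being an orthonormal expansion without `col_0`: Parseval's
identity and orthogonality to `col_0`, with the row `k = 0` expressed through the scalar `c`. -/
theorem isometry_aMat (x : ℕ → ℝ) (hx : Summable fun n => x n ^ 2) :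
    ∃ c : ℝ,
      HasSum (fun k => (∑' n, aMat (k + 1) (n + 1) * x n) ^ 2)
        (Real.pi ^ 2 * (∑' n, x n ^ 2) - c ^ 2 / 2) ∧
      HasSum (fun k => (∑' n, aMat (k + 1) (n + 1) * x n) * aMat (k + 1) 0) (-(2 * c)) := by
  have hpi := Real.pi_ne_zero
  have h2 : Real.sqrt 2 ^ 2 = 2 := Real.sq_sqrt (by norm_num)
  have horth : Orthonormal ℝ fun n => col (n + 1) :=
    orthonormal_col.comp _ (add_left_injective 1)
  have hsum : Summable fun n => x n • col (n + 1) := by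
    have := (horth.orthogonalFamily.summable_iff_norm_sq_summable x).mpr (by simpa using hx)
    simpa using this
  obtain ⟨y, hy⟩ := hsum
  have hW : ∀ k, (y : ℕ → ℝ) (k + 1) = (∑' n, aMat (k + 1) (n + 1) * x n) / Real.pi := by
    intro k
    have := hy.mapL (lp.evalCLM ℝ (fun _ : ℕ => ℝ) 2 (k + 1))
    have h3 : HasSum (fun n => x n * colFun (n + 1) (k + 1)) ((y : ℕ → ℝ) (k + 1)) := this
    rw [← h3.tsum_eq, ← tsum_div_const]
    refine tsum_congr fun n => ?_
    simp only [colFun]; ring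
  have hin : ∀ n, inner ℝ (col n) y = ∑' j, x j * (if n = j + 1 then 1 else 0) := by
    intro n
    have := hy.mapL (innerSL ℝ (col n))
    simp only [innerSL_apply_apply, inner_smul_right,
      orthonormal_iff_ite.mp orthonormal_col] at this
    exact this.tsum_eq.symm
  have hin0 : inner ℝ (col 0) y = 0 := by
    rw [hin]; simp
  have hinS : ∀ n, inner ℝ (col (n + 1)) y = x n := by
    intro n
    rw [hin, tsum_eq_single n]
    · simp
    · intro j hj
      simp [hj.symm]
  have hyy : inner ℝ y y = ∑' n, x n ^ 2 := by
    have := hy.mapL (innerSL ℝ y)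
    simp only [innerSL_apply_apply, inner_smul_right] at this
    rw [← this.tsum_eq]
    exact tsum_congr fun n => by rw [real_inner_comm (col (n + 1)) y, hinS]; ring
  refine ⟨(y : ℕ → ℝ) 0 * (Real.sqrt 2 * Real.pi), ?_, ?_⟩
  · have h := lp.hasSum_inner (𝕜 := ℝ) y y
    rw [hyy] at h
    have h' := ((hasSum_nat_add_iff' 1).mpr h).mul_left (Real.pi ^ 2)
    refine hasSum_of_eq h' (fun k => ?_) ?_
    · simp only [hW]
      simp
      field_simp
      rw [sq_abs, sq_abs, mul_comm]
    · simp
      rw [mul_pow, mul_pow, h2]; ring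
  · have h := lp.hasSum_inner (𝕜 := ℝ) (col 0) y
    rw [hin0] at h
    have h' := ((hasSum_nat_add_iff' 1).mpr h).mul_left (Real.pi ^ 2)
    refine hasSum_of_eq h' (fun k => ?_) ?_
    · simp only [hW, col_apply, colFun]
      simp
      field_simp
    · simp [col_apply, colFun]
      field_simp

/-! ### Upper bounds for the right-hand side -/

theorem kernel_le {t : ℝ} (h0 : 0 ≤ t) (h1 : t ≤ 1 / 4) :
    (1 + t) / (1 - t) ^ 2 ≤ 1 + 3 * t + 38 / 5 * t ^ 2 := by
  have h : 0 < 1 - t := by linarith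
  rw [div_le_iff₀ (by positivity)]
  have h3 : 0 ≤ 13 / 5 - 61 / 5 * t + 38 / 5 * t ^ 2 := by nlinarith
  have h4 := mul_nonneg (sq_nonneg t) h3
  nlinarith

theorem integral_cos_poly (α β : ℝ) :
    ∫ x in (-(1 / 2) : ℝ)..(1 / 2), Real.cos (Real.pi * x) * (1 + α * x ^ 2 + β * x ^ 4) =
      2 / Real.pi + α * (1 / (2 * Real.pi) - 4 / Real.pi ^ 3) +
        β * (1 / (8 * Real.pi) - 6 / Real.pi ^ 3 + 48 / Real.pi ^ 5) := by
  have hpi := Real.pi_ne_zero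
  -- the antiderivative obtained by repeated integration by parts
  have hd : ∀ x ∈ Set.uIcc (-(1 / 2) : ℝ) (1 / 2), HasDerivAt (fun x : ℝ =>
      Real.sin (Real.pi * x) * ((1 + α * x ^ 2 + β * x ^ 4) / Real.pi
        - (2 * α + 12 * β * x ^ 2) / Real.pi ^ 3 + 24 * β / Real.pi ^ 5)
      + Real.cos (Real.pi * x) * ((2 * α * x + 4 * β * x ^ 3) / Real.pi ^ 2
        - 24 * β * x / Real.pi ^ 4))
      (Real.cos (Real.pi * x) * (1 + α * x ^ 2 + β * x ^ 4)) x := by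
    intro x _
    have hl : HasDerivAt (fun x : ℝ => Real.pi * x) Real.pi x := by
      simpa using (hasDerivAt_id x).const_mul Real.pi
    have h1 : HasDerivAt (fun x : ℝ => x) 1 x := hasDerivAt_id x
    have h2 := hasDerivAt_pow 2 x
    have h3 := hasDerivAt_pow 3 x
    have h4 := hasDerivAt_pow 4 x
    have hP := (((((h2.const_mul α).const_add 1).add (h4.const_mul β)).div_const Real.pi).sub
      (((h2.const_mul (12 * β)).const_add (2 * α)).div_const (Real.pi ^ 3))).add_const
      (24 * β / Real.pi ^ 5)
    have hQ := (((h1.const_mul (2 * α)).add (h3.const_mul (4 * β))).div_const (Real.pi ^ 2)).sub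
      ((h1.const_mul (24 * β)).div_const (Real.pi ^ 4))
    refine ((hl.sin.mul hP).add (hl.cos.mul hQ)).congr_deriv ?_
    simp
    field_simp
    ring
  rw [intervalIntegral.integral_eq_sub_of_hasDerivAt hd
    (Continuous.intervalIntegrable (by fun_prop) _ _)]
  have e1 : Real.pi * (1 / 2) = Real.pi / 2 := by ring
  have e2 : Real.pi * -(1 / 2) = -(Real.pi / 2) := by ring
  rw [e1, e2, Real.sin_neg, Real.cos_neg, Real.sin_pi_div_two, Real.cos_pi_div_two]
  field_simp
  ring

theorem wSeq_nonneg (k : ℕ) : 0 ≤ wSeq k := by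
  refine mul_nonneg (by positivity) (intervalIntegral.integral_nonneg (by norm_num) fun x hx => ?_)
  refine div_nonneg (Real.cos_nonneg_of_mem_Icc ⟨?_, ?_⟩) (sq_nonneg _)
  · nlinarith [Real.pi_pos, hx.1]
  · nlinarith [Real.pi_pos, hx.2]

/-- Termwise integration of the bound `kernel_le` for the symmetrized integrand, `t = x²/k²`. -/
theorem wSeq_le (k : ℕ) (hk : 1 ≤ k) :
    wSeq k ≤ 1 / (Real.pi * (k : ℝ) ^ 2) * (2 / Real.pi +
      3 / (k : ℝ) ^ 2 * (1 / (2 * Real.pi) - 4 / Real.pi ^ 3) +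
        38 / 5 / (k : ℝ) ^ 4 * (1 / (8 * Real.pi) - 6 / Real.pi ^ 3 + 48 / Real.pi ^ 5)) := by
  have hk1 : (1 : ℝ) ≤ k := by exact_mod_cast hk
  have hne : ∀ x ∈ Set.Icc (-(1 / 2) : ℝ) (1 / 2), (x - k) ^ 2 ≠ 0 := fun x hx =>
    pow_ne_zero _ (by linarith [hx.2])
  have hneg : ∀ x ∈ Set.Icc (-(1 / 2) : ℝ) (1 / 2), (-x - k) ^ 2 ≠ 0 := fun x hx =>
    pow_ne_zero _ (by linarith [hx.1])
  have hu : Set.uIcc (-(1 / 2) : ℝ) (1 / 2) = Set.Icc (-(1 / 2) : ℝ) (1 / 2) :=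
    Set.uIcc_of_le (by norm_num)
  have hi : IntervalIntegrable (fun x => Real.cos (Real.pi * x) / (x - (k : ℝ)) ^ 2)
      MeasureTheory.volume (-(1 / 2)) (1 / 2) := by
    apply ContinuousOn.intervalIntegrable
    rw [hu]
    exact ContinuousOn.div (by fun_prop) (by fun_prop) hne
  have hi' : IntervalIntegrable (fun x => Real.cos (Real.pi * x) / (-x - (k : ℝ)) ^ 2)
      MeasureTheory.volume (-(1 / 2)) (1 / 2) := by
    apply ContinuousOn.intervalIntegrable
    rw [hu]
    exact ContinuousOn.div (by fun_prop) (by fun_prop) hneg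
  -- the integrand may be averaged over `x ↦ -x`, which removes the odd powers of `x`
  have hsym : ∫ x in (-(1 / 2) : ℝ)..(1 / 2), Real.cos (Real.pi * x) / (-x - (k : ℝ)) ^ 2 =
      ∫ x in (-(1 / 2) : ℝ)..(1 / 2), Real.cos (Real.pi * x) / (x - (k : ℝ)) ^ 2 := by
    have := intervalIntegral.integral_comp_neg (a := -(1 / 2)) (b := 1 / 2)
      (fun x : ℝ => Real.cos (Real.pi * x) / (x - (k : ℝ)) ^ 2)
    simpa using this
  have hle : (∫ x in (-(1 / 2) : ℝ)..(1 / 2), Real.cos (Real.pi * x) / (x - (k : ℝ)) ^ 2) +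
      (∫ x in (-(1 / 2) : ℝ)..(1 / 2), Real.cos (Real.pi * x) / (-x - (k : ℝ)) ^ 2) ≤
      2 / (k : ℝ) ^ 2 * ∫ x in (-(1 / 2) : ℝ)..(1 / 2), Real.cos (Real.pi * x) *
        (1 + 3 / (k : ℝ) ^ 2 * x ^ 2 + 38 / 5 / (k : ℝ) ^ 4 * x ^ 4) := by
    rw [← intervalIntegral.integral_add hi hi', ← intervalIntegral.integral_const_mul]
    refine intervalIntegral.integral_mono_on (by norm_num) (hi.add hi')
      (Continuous.intervalIntegrable (by fun_prop) _ _) fun x hx => ?_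
    have hc : 0 ≤ Real.cos (Real.pi * x) := by
      refine Real.cos_nonneg_of_mem_Icc ⟨?_, ?_⟩
      · nlinarith [Real.pi_pos, hx.1]
      · nlinarith [Real.pi_pos, hx.2]
    have hx2 : x ^ 2 ≤ 1 / 4 := by nlinarith [hx.1, hx.2]
    have hk2 : (1 : ℝ) ≤ (k : ℝ) ^ 2 := by nlinarith
    have ht : x ^ 2 / (k : ℝ) ^ 2 ≤ 1 / 4 := by
      rw [div_le_iff₀ (by positivity)]; nlinarith
    have hK := kernel_le (t := x ^ 2 / (k : ℝ) ^ 2) (by positivity) ht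
    have hk0 : (k : ℝ) ≠ 0 := by positivity
    have n1 : x - (k : ℝ) ≠ 0 := by linarith [hx.2]
    have n2 : -x - (k : ℝ) ≠ 0 := by linarith [hx.1]
    have n3 : 1 - x ^ 2 / (k : ℝ) ^ 2 ≠ 0 := by linarith
    have id1 : 1 / (x - (k : ℝ)) ^ 2 + 1 / (-x - (k : ℝ)) ^ 2 =
        2 / (k : ℝ) ^ 2 * ((1 + x ^ 2 / (k : ℝ) ^ 2) / (1 - x ^ 2 / (k : ℝ) ^ 2) ^ 2) := by
      have n4 : 1 - x ^ 2 / (k : ℝ) ^ 2 = (x - k) * (-x - k) / k ^ 2 := by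
        field_simp; ring
      rw [n4]
      field_simp
      ring
    calc Real.cos (Real.pi * x) / (x - (k : ℝ)) ^ 2 + Real.cos (Real.pi * x) / (-x - (k : ℝ)) ^ 2
        = Real.cos (Real.pi * x) * (1 / (x - (k : ℝ)) ^ 2 + 1 / (-x - (k : ℝ)) ^ 2) := by ring
      _ ≤ Real.cos (Real.pi * x) * (2 / (k : ℝ) ^ 2 * (1 + 3 * (x ^ 2 / (k : ℝ) ^ 2) +
            38 / 5 * (x ^ 2 / (k : ℝ) ^ 2) ^ 2)) := by
          rw [id1]; gcongr
      _ = _ := by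
          field_simp
  rw [hsym, integral_cos_poly] at hle
  unfold wSeq
  have hpi := Real.pi_pos
  calc _ ≤ 1 / Real.pi * (1 / (k : ℝ) ^ 2 * (2 / Real.pi +
      3 / (k : ℝ) ^ 2 * (1 / (2 * Real.pi) - 4 / Real.pi ^ 3) +
        38 / 5 / (k : ℝ) ^ 4 * (1 / (8 * Real.pi) - 6 / Real.pi ^ 3 + 48 / Real.pi ^ 5))) := by
        refine mul_le_mul_of_nonneg_left ?_ (by positivity)
        have : ∀ J : ℝ, 2 / (k : ℝ) ^ 2 * J = 2 * (1 / (k : ℝ) ^ 2 * J) := fun J => by ring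
        rw [this] at hle
        linarith
    _ = _ := by rw [← mul_assoc, one_div_mul_one_div]

theorem inv_pi_bounds : 318309 / 1000000 < 1 / Real.pi ∧ 1 / Real.pi < 318310 / 1000000 := by
  have h1 := Real.pi_gt_d6
  have h2 := Real.pi_lt_d6
  have := Real.pi_pos
  constructor
  · rw [lt_div_iff₀ this]; linarith
  · rw [div_lt_iff₀ this]; linarith

/-- Numerical bounds for the moments `∫ x² cos(πx)` and `∫ x⁴ cos(πx)` over `[-1/2, 1/2]`. -/
theorem moment_bounds :
    (0 ≤ 1 / (2 * Real.pi) - 4 / Real.pi ^ 3 ∧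
      1 / (2 * Real.pi) - 4 / Real.pi ^ 3 ≤ 302 / 10000) ∧
    (0 ≤ 1 / (8 * Real.pi) - 6 / Real.pi ^ 3 + 48 / Real.pi ^ 5 ∧
      1 / (8 * Real.pi) - 6 / Real.pi ^ 3 + 48 / Real.pi ^ 5 ≤ 32 / 10000) := by
  obtain ⟨h1, h2⟩ := inv_pi_bounds
  have e1 : 1 / (2 * Real.pi) - 4 / Real.pi ^ 3 = (1 / Real.pi) / 2 - 4 * (1 / Real.pi) ^ 3 := by
    field_simp
  have e2 : 1 / (8 * Real.pi) - 6 / Real.pi ^ 3 + 48 / Real.pi ^ 5 =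
      (1 / Real.pi) / 8 - 6 * (1 / Real.pi) ^ 3 + 48 * (1 / Real.pi) ^ 5 := by
    field_simp
  rw [e1, e2]
  generalize 1 / Real.pi = p at *
  have a3 := pow_le_pow_left₀ (by norm_num) h1.le 3
  have b3 := pow_le_pow_left₀ (by linarith) h2.le 3
  have a5 := pow_le_pow_left₀ (by norm_num) h1.le 5
  have b5 := pow_le_pow_left₀ (by linarith) h2.le 5
  norm_num at a3 b3 a5 b5
  refine ⟨⟨?_, ?_⟩, ?_, ?_⟩ <;> linarith

/-- `wSeq_le` with the moments replaced by decimals and `1/k²` inside the bracket by an upper bound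
`s`. -/
theorem wSeq_le_gen (k : ℕ) (hk : 1 ≤ k) (s : ℝ) (hs : 1 / (k : ℝ) ^ 2 ≤ s) :
    wSeq k ≤ 31831 / 100000 * (63662 / 100000 + 3 * s * (302 / 10000) +
      38 / 5 * s ^ 2 * (32 / 10000)) / (k : ℝ) ^ 2 := by
  have hk1 : (1 : ℝ) ≤ k := by exact_mod_cast hk
  refine (wSeq_le k hk).trans ?_
  obtain ⟨⟨a, b⟩, c, d⟩ := moment_bounds
  obtain ⟨h1, h2⟩ := inv_pi_bounds
  have hs0 : 0 ≤ 1 / (k : ℝ) ^ 2 := by positivity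
  have e3 : 3 / (k : ℝ) ^ 2 = 3 * (1 / (k : ℝ) ^ 2) := by ring
  have e4 : 38 / 5 / (k : ℝ) ^ 4 = 38 / 5 * (1 / (k : ℝ) ^ 2) ^ 2 := by
    rw [one_div_pow, ← pow_mul]; ring
  have e5 : (2 : ℝ) / Real.pi = 2 * (1 / Real.pi) := by ring
  have e6 : 1 / (Real.pi * (k : ℝ) ^ 2) = 1 / Real.pi * (1 / (k : ℝ) ^ 2) := by
    rw [one_div_mul_one_div]
  have e7 : ∀ Y : ℝ, 31831 / 100000 * Y / (k : ℝ) ^ 2 =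
      31831 / 100000 * Y * (1 / (k : ℝ) ^ 2) := fun Y => by ring
  rw [e3, e4, e5, e6, e7, mul_right_comm]
  generalize 1 / (k : ℝ) ^ 2 = q at *
  refine mul_le_mul_of_nonneg_right ?_ hs0
  have hs1 : 0 ≤ s := hs0.trans hs
  have hX : 2 * (1 / Real.pi) ≤ 63662 / 100000 := by linarith
  have hq2 : q ^ 2 ≤ s ^ 2 := pow_le_pow_left₀ hs0 hs 2
  have h3 : 1 / Real.pi ≤ 31831 / 100000 := by linarith
  have h4 : (0 : ℝ) ≤ 1 / Real.pi := by linarith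
  generalize 1 / (2 * Real.pi) - 4 / Real.pi ^ 3 = u at *
  generalize 1 / (8 * Real.pi) - 6 / Real.pi ^ 3 + 48 / Real.pi ^ 5 = v at *
  generalize 1 / Real.pi = r at *
  gcongr

theorem wSeq_one_le : wSeq 1 ≤ 2393 / 10000 := by
  have := wSeq_le_gen 1 le_rfl 1 (by norm_num)
  norm_num at this ⊢
  linarith

theorem wSeq_two_le (k : ℕ) : wSeq (k + 2) ≤ 2109 / 10000 / ((k : ℝ) + 2) ^ 2 := by
  have hk : (0 : ℝ) ≤ k := Nat.cast_nonneg k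
  have := wSeq_le_gen (k + 2) (by omega) (1 / 4) (by
    push_cast
    apply one_div_le_one_div_of_le (by norm_num); nlinarith)
  push_cast at this
  refine this.trans ?_
  gcongr
  norm_num

/-! ### Tail sums and the norm bound -/

theorem hasSum_inv_sq_tail :
    HasSum (fun k : ℕ => 1 / ((k : ℝ) + 2) ^ 2) (Real.pi ^ 2 / 6 - 1) := by
  refine hasSum_of_eq ((hasSum_nat_add_iff' 2).mpr hasSum_zeta_two) (fun k => ?_) ?_
  · push_cast; rfl
  · simp [Finset.sum_range_succ]

theorem hasSum_inv_four_tail :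
    HasSum (fun k : ℕ => 1 / ((k : ℝ) + 2) ^ 4) (Real.pi ^ 4 / 90 - 1) := by
  refine hasSum_of_eq ((hasSum_nat_add_iff' 2).mpr hasSum_zeta_four) (fun k => ?_) ?_
  · push_cast; rfl
  · simp [Finset.sum_range_succ]

theorem neg_aMat_zero (k : ℕ) :
    -aMat (k + 2) 0 = 1 / (((k : ℝ) + 2) ^ 2 - 1 / 4) := by
  have h1 := half_sub_ne_zero 0 (k + 2)
  have h2 := half_add_ne_zero 0 (k + 2)
  have h3 : ((k : ℝ) + 2) ^ 2 - 1 / 4 = -((((0 : ℕ) : ℝ) - ((k + 2 : ℕ) : ℝ) + 1 / 2) *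
      (((0 : ℕ) : ℝ) + ((k + 2 : ℕ) : ℝ) + 1 / 2)) := by
    push_cast; ring
  have h4 : (((0 : ℕ) : ℝ) - ((k + 2 : ℕ) : ℝ) + 1 / 2) +
      (((0 : ℕ) : ℝ) + ((k + 2 : ℕ) : ℝ) + 1 / 2) = 1 := by
    push_cast; ring
  rw [h3]
  unfold aMat
  generalize ((0 : ℕ) : ℝ) - ((k + 2 : ℕ) : ℝ) + 1 / 2 = p at *
  generalize ((0 : ℕ) : ℝ) + ((k + 2 : ℕ) : ℝ) + 1 / 2 = q at *
  field_simp
  linear_combination -h4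

theorem aMat_one_zero : aMat 1 0 = -(4 / 3) := by
  unfold aMat; norm_num

/-- `∑_{K≥2} 1/(K²(K²-1/4))`, computed from `1/(K²(K²-1/4)) = 4(1/(K²-1/4) - 1/K²)`. -/
theorem hasSum_tail_weight :
    HasSum (fun k : ℕ => 1 / ((k : ℝ) + 2) ^ 2 * -aMat (k + 2) 0)
      (20 / 3 - 2 * Real.pi ^ 2 / 3) := by
  have h := ((hasSum_nat_add_iff' 1).mpr (hasSum_aMat 0)).neg
  refine hasSum_of_eq ((h.sub hasSum_inv_sq_tail).mul_left 4) (fun k => ?_) ?_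
  · have h1 : ((k : ℝ) + 2) ^ 2 - 1 / 4 ≠ 0 := by
      have : (0 : ℝ) ≤ k := Nat.cast_nonneg k
      nlinarith
    have h2 : ((k : ℝ) + 2) ^ 2 ≠ 0 := by positivity
    rw [show k + 1 + 1 = k + 2 from rfl, neg_aMat_zero]
    generalize ((k : ℝ) + 2) ^ 2 = Q at *
    have h3 : Q * 4 - 1 ≠ 0 := fun h => h1 (by linarith)
    field_simp
    ring
  · rw [Finset.sum_range_one, zero_add, aMat_one_zero]
    norm_num
    ring

theorem wSeq_sq_tail_le (k : ℕ) :
    wSeq (k + 2) ^ 2 ≤ (2109 / 10000) ^ 2 * (1 / ((k : ℝ) + 2) ^ 4) := by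
  refine (pow_le_pow_left₀ (wSeq_nonneg _) (wSeq_two_le k) 2).trans (le_of_eq ?_)
  rw [div_pow, ← pow_mul]
  ring

theorem summable_wSeq_sq : Summable fun k : ℕ => (wSeq (k + 1)) ^ 2 := by
  rw [← summable_nat_add_iff 1]
  exact Summable.of_nonneg_of_le (fun k => sq_nonneg _) wSeq_sq_tail_le
    (hasSum_inv_four_tail.mul_left _).summable

/-- `w` is square-summable, and any square-summable solution `x` of `Ax = w`
(here `x n` denotes `x_{n+1}`, `n : ℕ`) satisfies `‖x‖ ≤ 0.088`. -/
theorem norm_Bw_le :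
    (Summable fun k : ℕ => (wSeq (k + 1)) ^ 2) ∧
    ∀ x : ℕ → ℝ, (Summable fun n : ℕ => (x n) ^ 2) →
      (∀ k : ℕ, 1 ≤ k → (∑' n : ℕ, aMat k (n + 1) * x n) = wSeq k) →
      Real.sqrt (∑' n : ℕ, (x n) ^ 2) ≤ 0.088 := by
  refine ⟨summable_wSeq_sq, fun x hx hA => ?_⟩
  obtain ⟨c, hc1, hc2⟩ := isometry_aMat x hx
  have hA' : ∀ k : ℕ, (∑' n : ℕ, aMat (k + 1) (n + 1) * x n) = wSeq (k + 1) :=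
    fun k => hA (k + 1) (by omega)
  simp only [hA'] at hc1 hc2
  have h1 := (hasSum_nat_add_iff' 1).mpr hc1
  have h2 := ((hasSum_nat_add_iff' 1).mpr hc2).neg
  rw [Finset.sum_range_one, zero_add] at h1 h2
  -- `‖w‖² - w_1² ≤ 0.2109² (ζ(4) - 1)`, where `‖w‖² = π² ‖x‖² - c²/2`
  have b1 := hasSum_le wSeq_sq_tail_le h1 (hasSum_inv_four_tail.mul_left _)
  have hpos : ∀ k : ℕ, 0 ≤ -aMat (k + 2) 0 := fun k => by
    rw [neg_aMat_zero]
    have : (0 : ℝ) ≤ k := Nat.cast_nonneg k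
    exact one_div_nonneg.mpr (by nlinarith)
  have b2 : -(-(2 * c) - wSeq 1 * aMat 1 0) ≤
      2109 / 10000 * (20 / 3 - 2 * Real.pi ^ 2 / 3) := by
    refine hasSum_le (fun k => ?_) h2 (hasSum_tail_weight.mul_left (2109 / 10000))
    have := mul_le_mul_of_nonneg_right (wSeq_two_le k) (hpos k)
    rw [div_eq_mul_one_div] at this
    rw [show k + 1 + 1 = k + 2 from rfl]
    linarith
  have b3 : 0 ≤ -(-(2 * c) - wSeq 1 * aMat 1 0) := by
    refine h2.nonneg fun k => ?_
    have := mul_nonneg (wSeq_nonneg (k + 2)) (hpos k)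
    rw [show k + 1 + 1 = k + 2 from rfl]
    linarith
  rw [aMat_one_zero] at b2 b3
  have w0 := wSeq_nonneg 1
  have w1 := wSeq_one_le
  have p1 := Real.pi_gt_d6
  have p2 := Real.pi_lt_d6
  have p3 : (3.141592 : ℝ) ^ 2 ≤ Real.pi ^ 2 := pow_le_pow_left₀ (by norm_num) p1.le 2
  have p4 : Real.pi ^ 4 ≤ (3.141593 : ℝ) ^ 4 := pow_le_pow_left₀ Real.pi_pos.le p2.le 4
  have c0 : 0 ≤ c := by linarith
  have c1 : c ≤ 0.169 := by
    norm_num at p3 ⊢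
    linarith
  have c2 : c ^ 2 ≤ 0.169 ^ 2 := pow_le_pow_left₀ c0 c1 2
  have w2 : wSeq 1 ^ 2 ≤ (2393 / 10000) ^ 2 := pow_le_pow_left₀ w0 w1 2
  have hS : 0 ≤ ∑' n : ℕ, x n ^ 2 := tsum_nonneg fun n => sq_nonneg _
  apply Real.sqrt_le_iff.mpr
  refine ⟨by norm_num, ?_⟩
  have hm := mul_le_mul_of_nonneg_right p3 hS
  norm_num at hm p4 c2 w2 b1 ⊢
  linarith
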